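/- For λ ∈ (0, 1) and real numbers x, y > 0 with x ≠ y, the weighted geometric mean G_{x,y;λ}(t) = (x+t)^λ (y+t)^{1−λ} is a Bernstein function of t on (−min{x,y}, ∞): it is nonnegative, has derivatives of all orders, and its first derivative is completely monotonic on (−min{x,y}, ∞). -/

import Mathlib

open Real

/-!
The product `(x + t) ^ p * (y + t) ^ q` with `p + q = 1` has second derivative
`-(p * q * (x - y) ^ 2) * ((x + t) ^ (p - 2) * (y + t) ^ (q - 2))`. When `p, q ≥ 0`, both remaining
exponents are negative, so minus the second derivative is a nonnegative multiple of a product of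
completely monotone powers. As the first derivative is nonnegative, it is itself completely
monotone.
-/

open Set
open scoped ContDiff

/-- Complete monotonicity of `f` on `s`. The derivatives are the unrestricted ones, so the notion
is meant for open `s`. -/
def CompletelyMonotoneOn (f : ℝ → ℝ) (s : Set ℝ) : Prop :=
  ContDiffOn ℝ ∞ f s ∧ ∀ n : ℕ, ∀ t ∈ s, 0 ≤ (-1 : ℝ) ^ n * iteratedDeriv n f t

/-- Bernstein functions on `s`: nonnegative smooth functions with completely monotone derivative.
The derivative is the unrestricted one, so the notion is meant for open `s`. -/
def BernsteinOn (f : ℝ → ℝ) (s : Set ℝ) : Prop :=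
  (∀ t ∈ s, 0 ≤ f t) ∧ ContDiffOn ℝ ∞ f s ∧ CompletelyMonotoneOn (deriv f) s

namespace CompletelyMonotoneOn

variable {f g : ℝ → ℝ} {s u : Set ℝ}

theorem mono (hf : CompletelyMonotoneOn f s) (hus : u ⊆ s) : CompletelyMonotoneOn f u :=
  ⟨hf.1.mono hus, fun n t ht => hf.2 n t (hus ht)⟩

theorem congr (hf : CompletelyMonotoneOn f s) (hs : IsOpen s) (hgf : EqOn g f s) :
    CompletelyMonotoneOn g s := by
  refine ⟨hf.1.congr hgf, fun n t ht => ?_⟩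
  rw [hgf.iteratedDeriv_of_isOpen hs n ht]
  exact hf.2 n t ht

theorem const_mul {c : ℝ} (hc : 0 ≤ c) (hf : CompletelyMonotoneOn f s) :
    CompletelyMonotoneOn (fun t => c * f t) s := by
  refine ⟨contDiffOn_const.mul hf.1, fun n t ht => ?_⟩
  rw [iteratedDeriv_const_mul_field, mul_left_comm]
  exact mul_nonneg hc (hf.2 n t ht)

theorem mul (hs : IsOpen s) (hf : CompletelyMonotoneOn f s) (hg : CompletelyMonotoneOn g s) :
    CompletelyMonotoneOn (fun t => f t * g t) s := by
  refine ⟨hf.1.mul hg.1, fun n t ht => ?_⟩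
  have smooth_at {h : ℝ → ℝ} (hh : ContDiffOn ℝ ∞ h s) : ContDiffAt ℝ n h t :=
    (hh.contDiffAt (hs.mem_nhds ht)).of_le (mod_cast le_top)
  rw [iteratedDeriv_fun_mul (smooth_at hf.1) (smooth_at hg.1), Finset.mul_sum]
  refine Finset.sum_nonneg fun i hi => ?_
  have sign_split : (-1 : ℝ) ^ n = (-1) ^ i * (-1) ^ (n - i) := by
    rw [← pow_add, Nat.add_sub_cancel' (Finset.mem_range_succ_iff.mp hi)]
  calc
    0 ≤ n.choose i * ((-1 : ℝ) ^ i * iteratedDeriv i f t) *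
        ((-1) ^ (n - i) * iteratedDeriv (n - i) g t) :=
      mul_nonneg (mul_nonneg (Nat.cast_nonneg _) (hf.2 i t ht)) (hg.2 (n - i) t ht)
    _ = (-1) ^ n * (n.choose i * iteratedDeriv i f t * iteratedDeriv (n - i) g t) := by
      rw [sign_split]; ring

theorem comp_const_add (hf : CompletelyMonotoneOn f s) (c : ℝ) :
    CompletelyMonotoneOn (fun t => f (c + t)) ((c + ·) ⁻¹' s) := by
  refine ⟨hf.1.comp (by fun_prop) (mapsTo_preimage _ _), fun n t ht => ?_⟩
  rw [iteratedDeriv_comp_const_add]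
  exact hf.2 n (c + t) ht

theorem of_neg_deriv (hs : IsOpen s) (hf : DifferentiableOn ℝ f s) (hf₀ : ∀ t ∈ s, 0 ≤ f t)
    (hf' : CompletelyMonotoneOn (fun t => -deriv f t) s) : CompletelyMonotoneOn f s := by
  refine ⟨(contDiffOn_infty_iff_deriv_of_isOpen hs).2 ⟨hf, by simpa using! hf'.1.neg⟩, ?_⟩
  rintro (_ | n) t ht
  · simpa using hf₀ t ht
  · have := hf'.2 n t ht
    rwa [iteratedDeriv_fun_neg, mul_neg, ← neg_one_mul, ← mul_assoc, ← pow_succ',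
      ← iteratedDeriv_succ'] at this

end CompletelyMonotoneOn

theorem completelyMonotoneOn_rpow_const {p : ℝ} (hp : p ≤ 0) :
    CompletelyMonotoneOn (fun t => t ^ p) (Ioi 0) := by
  refine ⟨fun t ht => (contDiffAt_rpow_const_of_ne (ne_of_gt ht)).contDiffWithinAt,
    fun n t ht => ?_⟩
  have pochhammer_nonneg : 0 ≤ (ascPochhammer ℝ n).eval (-p) := by
    rcases hp.eq_or_lt with rfl | hp
    · rw [neg_zero, ascPochhammer_eval_zero]
      positivity
    · exact (ascPochhammer_pos n (-p) (neg_pos.2 hp)).le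
  rw [iteratedDeriv_eq_iterate, iter_deriv_rpow_const, ← mul_assoc,
    ← ascPochhammer_eval_neg_eq_descPochhammer]
  exact mul_nonneg pochhammer_nonneg (rpow_nonneg (le_of_lt ht) _)

theorem BernsteinOn.of_neg_deriv_deriv {f : ℝ → ℝ} {s : Set ℝ} (hs : IsOpen s)
    (hf : ContDiffOn ℝ ∞ f s) (hf₀ : ∀ t ∈ s, 0 ≤ f t) (hf₁ : ∀ t ∈ s, 0 ≤ deriv f t)
    (hf₂ : CompletelyMonotoneOn (fun t => -deriv (deriv f) t) s) : BernsteinOn f s := by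
  have hf' : ContDiffOn ℝ ∞ (deriv f) s := ((contDiffOn_infty_iff_deriv_of_isOpen hs).1 hf).2
  exact ⟨hf₀, hf, .of_neg_deriv hs (hf'.differentiableOn (by simp)) hf₁ hf₂⟩

section ShiftedPowers

variable {p q x y t : ℝ}

theorem mem_Ioi_neg_min_iff : t ∈ Ioi (-min x y) ↔ 0 < x + t ∧ 0 < y + t := by
  rw [mem_Ioi, neg_lt_iff_pos_add', ← min_add_add_right, lt_min_iff]

theorem completelyMonotoneOn_shifted_rpow_mul_rpow (hp : p ≤ 0) (hq : q ≤ 0) :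
    CompletelyMonotoneOn (fun t => (x + t) ^ p * (y + t) ^ q) (Ioi (-min x y)) :=
  .mul isOpen_Ioi
    (((completelyMonotoneOn_rpow_const hp).comp_const_add x).mono
      fun _ ht => (mem_Ioi_neg_min_iff.1 ht).1)
    (((completelyMonotoneOn_rpow_const hq).comp_const_add y).mono
      fun _ ht => (mem_Ioi_neg_min_iff.1 ht).2)

theorem contDiffOn_shifted_rpow_mul_rpow {n : WithTop ℕ∞} :
    ContDiffOn ℝ n (fun t => (x + t) ^ p * (y + t) ^ q) (Ioi (-min x y)) :=
  ((contDiff_const.add contDiff_id).contDiffOn.rpow_const_of_ne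
      fun _ ht => (mem_Ioi_neg_min_iff.1 ht).1.ne').mul
    ((contDiff_const.add contDiff_id).contDiffOn.rpow_const_of_ne
      fun _ ht => (mem_Ioi_neg_min_iff.1 ht).2.ne')

theorem hasDerivAt_shifted_rpow_mul_rpow (hx : x + t ≠ 0) (hy : y + t ≠ 0) :
    HasDerivAt (fun t => (x + t) ^ p * (y + t) ^ q)
      (p * ((x + t) ^ (p - 1) * (y + t) ^ q) + q * ((x + t) ^ p * (y + t) ^ (q - 1))) t := by
  have hasDerivAt_shifted_rpow {c r : ℝ} (hc : c + t ≠ 0) :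
      HasDerivAt (fun t => (c + t) ^ r) (1 * r * (c + t) ^ (r - 1)) t :=
    ((hasDerivAt_id t).const_add c).rpow_const (.inl hc)
  convert! (hasDerivAt_shifted_rpow hx).mul (hasDerivAt_shifted_rpow hy) using 1
  ring

theorem eqOn_deriv_shifted_rpow_mul_rpow :
    EqOn (deriv fun t => (x + t) ^ p * (y + t) ^ q)
      (fun t => p * ((x + t) ^ (p - 1) * (y + t) ^ q) + q * ((x + t) ^ p * (y + t) ^ (q - 1)))
      (Ioi (-min x y)) := fun _ ht =>
  have ⟨hx, hy⟩ := mem_Ioi_neg_min_iff.1 ht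
  (hasDerivAt_shifted_rpow_mul_rpow hx.ne' hy.ne').deriv

theorem eqOn_deriv_deriv_shifted_rpow_mul_rpow (hpq : p + q = 1) :
    EqOn (deriv (deriv fun t => (x + t) ^ p * (y + t) ^ q))
      (fun t => -(p * q * (x - y) ^ 2) * ((x + t) ^ (p - 2) * (y + t) ^ (q - 2)))
      (Ioi (-min x y)) := by
  intro t ht
  obtain ⟨hx, hy⟩ := mem_Ioi_neg_min_iff.1 ht
  obtain rfl : q = 1 - p := eq_sub_of_add_eq' hpq
  have rpow_sub_two {a : ℝ} (ha : 0 < a) (r : ℝ) : a ^ (r - 2) = a ^ r / a ^ 2 :=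
    mod_cast rpow_sub_natCast ha.ne' r 2
  have second_deriv :=
    ((hasDerivAt_shifted_rpow_mul_rpow (p := p - 1) (q := 1 - p) hx.ne' hy.ne').const_mul p).add
      ((hasDerivAt_shifted_rpow_mul_rpow (p := p) (q := 1 - p - 1) hx.ne' hy.ne').const_mul (1 - p))
  rw [eqOn_deriv_shifted_rpow_mul_rpow.deriv isOpen_Ioi ht]
  refine second_deriv.deriv.trans ?_
  simp only [rpow_sub_two hx, rpow_sub_two hy, rpow_sub_one hx.ne', rpow_sub_one hy.ne']
  field_simp
  ring

end ShiftedPowers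

theorem weighted_geometric_mean_bernstein_general {p q : ℝ} (hp : 0 ≤ p) (hq : 0 ≤ q)
    (hpq : p + q = 1) (x y : ℝ) :
    BernsteinOn (fun t => (x + t) ^ p * (y + t) ^ q) (Ioi (-min x y)) := by
  refine .of_neg_deriv_deriv isOpen_Ioi contDiffOn_shifted_rpow_mul_rpow
    (fun t ht => ?nonneg) (fun t ht => ?deriv_nonneg) ?neg_deriv_deriv
  case nonneg =>
    obtain ⟨hx, hy⟩ := mem_Ioi_neg_min_iff.1 ht
    positivity
  case deriv_nonneg =>
    obtain ⟨hx, hy⟩ := mem_Ioi_neg_min_iff.1 ht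
    rw [eqOn_deriv_shifted_rpow_mul_rpow ht]
    positivity
  case neg_deriv_deriv =>
    have powers_cm : CompletelyMonotoneOn (fun t => (x + t) ^ (p - 2) * (y + t) ^ (q - 2))
        (Ioi (-min x y)) :=
      completelyMonotoneOn_shifted_rpow_mul_rpow (by linarith) (by linarith)
    refine (powers_cm.const_mul (by positivity : 0 ≤ p * q * (x - y) ^ 2)).congr isOpen_Ioi
      fun t ht => ?_
    simp only [eqOn_deriv_deriv_shifted_rpow_mul_rpow hpq ht, neg_mul, neg_neg]

theorem weighted_geometric_mean_bernstein
    (lam x y : ℝ) (hlam : lam ∈ Set.Ioo (0 : ℝ) 1)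
    (hx : 0 < x) (hy : 0 < y) (hxy : x ≠ y) :
    (∀ t : ℝ, t ∈ Set.Ioi (-(min x y)) →
        0 ≤ (x + t) ^ lam * (y + t) ^ (1 - lam)) ∧
      ContDiffOn ℝ (⊤ : ℕ∞) (fun t : ℝ => (x + t) ^ lam * (y + t) ^ (1 - lam))
        (Set.Ioi (-(min x y))) ∧
      ∀ n : ℕ, ∀ t : ℝ, t ∈ Set.Ioi (-(min x y)) →
        0 ≤ (-1 : ℝ) ^ n *
          iteratedDeriv n
            (deriv (fun t : ℝ => (x + t) ^ lam * (y + t) ^ (1 - lam))) t := by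
  obtain ⟨nonneg, smooth, deriv_cm⟩ := weighted_geometric_mean_bernstein_general hlam.1.le
    (sub_nonneg.2 hlam.2.le) (add_sub_cancel lam 1) x y
  exact ⟨nonneg, smooth, deriv_cm.2⟩
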